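/- arXiv:2501.09599 — 2 statements merged into one kernel-verified Lean document; each statement's English description precedes it below -/
import Mathlib

section
/- Let μ be an affinely irreducible self-similar measure on ℝ^d. Then there exists α > 0 such that for all β > α, the set of x ∈ ℝ^d for which max_{1≤i≤d} |x_i − p_i/q| ≤ q^{−(d+1)/d}(log q)^{−β} holds for infinitely many pairs (p,q) ∈ ℤ^d × ℕ with q ≥ 2 has μ-measure zero. -/
noncomputable section
open MeasureTheory Metric Filter Topology

variable {E : Type*} [NormedAddCommGroup E] [NormedSpace ℝ E]

/-- `f` is a contraction with ratio `r ∈ (0,1)`. -/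
def IsContractionWith (r : ℝ) (f : E → E) : Prop :=
  0 < r ∧ r < 1 ∧ ∀ x y, ‖f x - f y‖ ≤ r * ‖x - y‖

/-- `f` is a contracting similarity with ratio `r ∈ (0,1)`. -/
def IsSimilarityWith (r : ℝ) (f : E → E) : Prop :=
  0 < r ∧ r < 1 ∧ ∀ x y, ‖f x - f y‖ = r * ‖x - y‖

/-- A self-conformal IFS. -/
def IsSelfConformalIFS {A : Type*} [Fintype A] (φ : A → E → E) : Prop :=
  2 ≤ Fintype.card A ∧
  (∀ a, ∃ r, IsContractionWith r (φ a)) ∧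
  (∀ a, ContDiff ℝ 1 (φ a)) ∧
  (∀ a x, 0 < ‖fderiv ℝ (φ a) x‖ ∧ ∀ v, ‖fderiv ℝ (φ a) x v‖ = ‖fderiv ℝ (φ a) x‖ * ‖v‖) ∧
  (∃ H α₀ : ℝ, 0 < H ∧ 0 < α₀ ∧ ∀ a x y,
    |‖fderiv ℝ (φ a) x‖ - ‖fderiv ℝ (φ a) y‖| ≤ H * ‖x - y‖ ^ α₀) ∧
  (∃ a₁ a₂ x₁ x₂, φ a₁ x₁ = x₁ ∧ φ a₂ x₂ = x₂ ∧ x₁ ≠ x₂)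

/-- A self-similar IFS. -/
def IsSelfSimilarIFS {A : Type*} [Fintype A] (φ : A → E → E) : Prop :=
  2 ≤ Fintype.card A ∧
  (∀ a, ∃ r, IsSimilarityWith r (φ a)) ∧
  (∃ a₁ a₂ x₁ x₂, φ a₁ x₁ = x₁ ∧ φ a₂ x₂ = x₂ ∧ x₁ ≠ x₂)

/-- The IFS is affinely irreducible: no (nonempty) proper affine subspace is preserved. -/
def AffinelyIrreducible {A : Type*} (φ : A → E → E) : Prop :=
  ¬ ∃ W : AffineSubspace ℝ E, (W : Set E).Nonempty ∧ W ≠ ⊤ ∧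
      ∀ a, φ a '' (W : Set E) ⊆ (W : Set E)

/-- Closed `ε`-neighbourhood of an affine subspace. -/
def affNbhd (W : AffineSubspace ℝ E) (ε : ℝ) : Set E :=
  {y | Metric.infDist y (W : Set E) ≤ ε}

/-- topological support of a measure -/
def msupport [MeasurableSpace E] (μ : Measure E) : Set E :=
  {x | ∀ r : ℝ, 0 < r → 0 < μ (Metric.ball x r)}

/-- distance between two sets -/
def setDist (S T : Set E) : ℝ := sInf (Set.image2 dist S T)

/-- map corresponding to a finite word (as a list) -/
def listMap {A : Type*} (φ : A → E → E) : List A → E → E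
  | [] => id
  | a :: l => φ a ∘ listMap φ l

/-- map corresponding to the first `n` letters of an infinite word -/
def wordMap {A : Type*} (φ : A → E → E) : ℕ → (ℕ → A) → E → E
  | 0, _ => id
  | n + 1, a => φ (a 0) ∘ wordMap φ n (fun k => a (k + 1))

/-- set of `Ψ`-well-approximable vectors in `ℝ^d` -/
def WApprox (d : ℕ) (Ψ : ℕ → ℝ) : Set (EuclideanSpace ℝ (Fin d)) :=
  {x | {pq : (Fin d → ℤ) × ℕ | 0 < pq.2 ∧
        ∀ i, |x i - (pq.1 i : ℝ) / (pq.2 : ℝ)| ≤ Ψ pq.2}.Infinite}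

/-- set of singular vectors in `ℝ^d` -/
def Sing (d : ℕ) : Set (EuclideanSpace ℝ (Fin d)) :=
  {x | ∀ c : ℝ, 0 < c → ∃ T : ℝ, 0 < T ∧ ∀ t : ℝ, T ≤ t →
    ∃ q : ℕ, 0 < q ∧ (q : ℝ) < t ∧
      ∀ i, |(q : ℝ) * x i - round ((q : ℝ) * x i)| ≤ c * t ^ (-(1 : ℝ) / (d : ℝ))}

/-
At every scale `ρ` the measure `μ` is a mixture of similar copies of itself of diameter about `ρ`.
Affine irreducibility and compactness give a slab width for which every slab has mass bounded away
from `1`; applied inside the copies, this makes the mass of a slab of width `ε` decay like a power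
of `ε`. By the simplex lemma the rational points of denominator about `N` in a ball of radius
`κ N^(-(d+1)/d)` lie on one hyperplane, so in each copy of `μ` of that size the points within
`L N^(-(d+1)/d)` of these rationals lie in a slab of relative width `L / κ`. Hence the set of
points this close to a rational of denominator about `N` has measure `O(L^α)`, and Borel–Cantelli
along `N = 2^n` with `L = (n log 2)^(-β)` finishes the proof once `α β > 1`.
-/

open scoped ENNReal RealInnerProductSpace

section Similitude

/-- A similarity of ratio `ρ > 0`. In contrast to `IsSimilarityWith`, the ratio need not be less
than `1`, so that compositions along arbitrary words, the empty one included, are covered. -/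
structure IsSimilitude {V : Type*} [NormedAddCommGroup V] (ρ : ℝ) (f : V → V) : Prop where
  pos : 0 < ρ
  norm_sub : ∀ x y, ‖f x - f y‖ = ρ * ‖x - y‖

namespace IsSimilitude

variable {V : Type*} [NormedAddCommGroup V] {ρ σ : ℝ} {f g : V → V}

lemma id : IsSimilitude 1 (id : V → V) := ⟨one_pos, by simp⟩

lemma comp (hf : IsSimilitude ρ f) (hg : IsSimilitude σ g) : IsSimilitude (ρ * σ) (f ∘ g) :=
  ⟨mul_pos hf.pos hg.pos, fun x y => by simp [hf.norm_sub, hg.norm_sub, mul_assoc]⟩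

lemma continuous (hf : IsSimilitude ρ f) : Continuous f := by
  refine (LipschitzWith.of_dist_le_mul (K := ⟨ρ, hf.pos.le⟩) fun x y => ?_).continuous
  rw [dist_eq_norm, dist_eq_norm, hf.norm_sub]
  rfl

variable [NormedSpace ℝ V]

lemma isometry_inv_smul (hf : IsSimilitude ρ f) : Isometry fun x => ρ⁻¹ • f x :=
  Isometry.of_dist_eq fun x y => by
    rw [dist_eq_norm, ← smul_sub, norm_smul, hf.norm_sub, Real.norm_of_nonneg (by
      have := hf.pos; positivity), inv_mul_cancel_left₀ hf.pos.ne', dist_eq_norm]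

variable [StrictConvexSpace ℝ V]

lemma exists_linearIsometry (hf : IsSimilitude ρ f) :
    ∃ L : V →ₗᵢ[ℝ] V, ∀ x, f x = ρ • L x + f 0 := by
  set T := hf.isometry_inv_smul.affineIsometryOfStrictConvexSpace
  refine ⟨T.linearIsometry, fun x => ?_⟩
  have hT : ∀ y, f y = ρ • T y := fun y => (smul_inv_smul₀ hf.pos.ne' (f y)).symm
  have hTx : T x = T.linearIsometry x + T 0 := by simpa using T.map_vadd 0 x
  rw [hT x, hT 0, hTx, smul_add]

lemma exists_affineMap (hf : IsSimilitude ρ f) : ∃ g : V →ᵃ[ℝ] V, ⇑g = f := by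
  obtain ⟨L, hL⟩ := hf.exists_linearIsometry
  exact ⟨(ρ • L.toLinearMap).toAffineMap + AffineMap.const ℝ V (f 0), funext fun x => (hL x).symm⟩

end IsSimilitude

lemma IsSimilarityWith.isSimilitude {V : Type*} [NormedAddCommGroup V] {ρ : ℝ} {f : V → V}
    (hf : IsSimilarityWith ρ f) : IsSimilitude ρ f :=
  ⟨hf.1, hf.2.2⟩

end Similitude

section Words

variable {X A : Type*} {f : A → X → X}

lemma listMap_append (u w : List A) : listMap f (u ++ w) = listMap f u ∘ listMap f w := by
  induction u with
  | nil => rfl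
  | cons a u ih => rw [List.cons_append, listMap, listMap, ih, Function.comp_assoc]

lemma mapsTo_listMap {s : Set X} (hs : ∀ a, Set.MapsTo (f a) s s) (w : List A) :
    Set.MapsTo (listMap f w) s s := by
  induction w with
  | nil => exact Set.mapsTo_id s
  | cons a w ih => exact (hs a).comp ih

end Words

section WordsOfSimilarities

variable {V A : Type*} [NormedAddCommGroup V] {φ : A → V → V} {r : A → ℝ}

lemma isSimilitude_listMap (hr : ∀ a, IsSimilarityWith (r a) (φ a)) (w : List A) :
    IsSimilitude (w.map r).prod (listMap φ w) := by
  induction w with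
  | nil => simpa [listMap] using IsSimilitude.id
  | cons a w ih => simpa [listMap] using (hr a).isSimilitude.comp ih

lemma exists_mapsTo_closedBall [Finite A] (hr : ∀ a, IsSimilarityWith (r a) (φ a)) :
    ∃ R, 0 ≤ R ∧ ∀ a, Set.MapsTo (φ a) (closedBall 0 R) (closedBall 0 R) := by
  have := Fintype.ofFinite A
  obtain ⟨R, hR⟩ := (Finset.univ.image fun a => ‖φ a 0‖ / (1 - r a)).exists_le
  refine ⟨max R 0, le_max_right _ _, fun a x hx => ?_⟩
  rw [mem_closedBall_zero_iff] at hx ⊢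
  have hra : 0 < 1 - r a := sub_pos.2 (hr a).2.1
  have hφ0 : ‖φ a 0‖ ≤ max R 0 * (1 - r a) := (div_le_iff₀ hra).1 <|
    (hR _ (Finset.mem_image_of_mem _ (Finset.mem_univ a))).trans (le_max_left _ _)
  calc ‖φ a x‖ ≤ ‖φ a x - φ a 0‖ + ‖φ a 0‖ := norm_le_norm_sub_add _ _
    _ ≤ r a * max R 0 + max R 0 * (1 - r a) := by
      rw [(hr a).2.2, sub_zero]
      have := (hr a).1
      gcongr
    _ = max R 0 := by ring

end WordsOfSimilarities

section Stationary

/-- The weights `p` are positive and sum to `1`, and `μ = ∑ a, p a • (φ a)_* μ`. If moreover the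
`φ a` are contracting similarities and `μ` is a probability measure, then `μ` is the self-similar
measure of `(φ, p)`. -/
structure IsStationaryMeasure {X A : Type*} [MeasurableSpace X] [Fintype A] (φ : A → X → X)
    (p : A → ℝ) (μ : Measure X) : Prop where
  pos : ∀ a, 0 < p a
  sum_eq_one : ∑ a, p a = 1
  eq_sum_map : μ = ∑ a, ENNReal.ofReal (p a) • μ.map (φ a)

namespace IsStationaryMeasure

variable {X A : Type*} [MeasurableSpace X] [Fintype A] {φ : A → X → X} {p : A → ℝ} {μ : Measure X}

lemma nonempty (h : IsStationaryMeasure φ p μ) : Nonempty A := by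
  by_contra hA
  rw [not_nonempty_iff] at hA
  simpa using h.sum_eq_one

lemma measure_eq_sum_map (h : IsStationaryMeasure φ p μ) (S : Set X) :
    μ S = ∑ a, ENNReal.ofReal (p a) * μ.map (φ a) S := by
  conv_lhs => rw [h.eq_sum_map]
  simp [Measure.finsetSum_apply]

lemma measure_eq_sum (h : IsStationaryMeasure φ p μ) (hφ : ∀ a, Measurable (φ a)) {S : Set X}
    (hS : MeasurableSet S) : μ S = ∑ a, ENNReal.ofReal (p a) * μ (φ a ⁻¹' S) := by
  simp_rw [h.measure_eq_sum_map S, Measure.map_apply (hφ _) hS]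

lemma mapsTo_support [TopologicalSpace X] [BorelSpace X] (h : IsStationaryMeasure φ p μ)
    (hφ : ∀ a, Continuous (φ a)) (a : A) : Set.MapsTo (φ a) μ.support μ.support := by
  intro x hx
  rw [Measure.mem_support_iff_forall] at hx ⊢
  intro U hU
  calc 0 < ENNReal.ofReal (p a) * μ (φ a ⁻¹' U) :=
        ENNReal.mul_pos (ENNReal.ofReal_pos.2 (h.pos a)).ne'
          (hx _ ((hφ a).continuousAt.preimage_mem_nhds hU)).ne'
    _ ≤ ENNReal.ofReal (p a) * μ.map (φ a) U :=
        mul_le_mul' le_rfl (Measure.le_map_apply (hφ a).measurable.aemeasurable U)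
    _ ≤ ∑ b, ENNReal.ofReal (p b) * μ.map (φ b) U :=
        Finset.single_le_sum_of_canonicallyOrdered
          (f := fun b => ENNReal.ofReal (p b) * μ.map (φ b) U) (Finset.mem_univ a)
    _ = μ U := (h.measure_eq_sum_map U).symm

end IsStationaryMeasure

end Stationary

section Stopping

variable {V A : Type*} [NormedAddCommGroup V] [MeasurableSpace V] [BorelSpace V] [Fintype A]
  {φ : A → V → V} {r p : A → ℝ} {μ : Measure V}

namespace IsStationaryMeasure

lemma measure_preimage_listMap_eq_sum (h : IsStationaryMeasure φ p μ)
    (hr : ∀ a, IsSimilarityWith (r a) (φ a)) (w : List A) {S : Set V} (hS : MeasurableSet S) :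
    μ (listMap φ w ⁻¹' S) =
      ∑ a, ENNReal.ofReal (p a) * μ (listMap φ (w ++ [a]) ⁻¹' S) := by
  have hφ := fun a => (hr a).isSimilitude.continuous.measurable
  rw [h.measure_eq_sum hφ ((isSimilitude_listMap hr w).continuous.measurable hS)]
  exact Finset.sum_congr rfl fun a _ => by rw [listMap_append]; rfl

-- Subdivide a cylinder until its ratio first drops to `ρ` or below.
lemma measure_le_mul_of_stopping (h : IsStationaryMeasure φ p μ)
    (hr : ∀ a, IsSimilarityWith (r a) (φ a)) {r₀ ρ : ℝ} (hr₀ : ∀ a, r₀ ≤ r a) (hρ : 0 < ρ)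
    (hρ1 : ρ < 1) {S T : Set V} (hS : MeasurableSet S) (hT : MeasurableSet T) {M : ℝ≥0∞}
    (hST : ∀ w : List A, r₀ * ρ ≤ (w.map r).prod → (w.map r).prod ≤ ρ →
      μ (listMap φ w ⁻¹' S) ≤ M * μ (listMap φ w ⁻¹' T)) :
    μ S ≤ M * μ T := by
  have := h.nonempty
  obtain ⟨b, hb⟩ := Finite.exists_max r
  have of_ratio : ∀ (k : ℕ) (w : List A), ρ < (w.map r).prod → (w.map r).prod * r b ^ k ≤ ρ →
      μ (listMap φ w ⁻¹' S) ≤ M * μ (listMap φ w ⁻¹' T) := by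
    intro k
    induction k with
    | zero => exact fun w hw hwk => absurd hw (by simpa using hwk)
    | succ k ih =>
      intro w hw hwk
      rw [h.measure_preimage_listMap_eq_sum hr w hS, h.measure_preimage_listMap_eq_sum hr w hT,
        Finset.mul_sum]
      refine Finset.sum_le_sum fun a _ => ?_
      rw [mul_left_comm]
      refine mul_le_mul' le_rfl ?_
      have ratio_append : ((w ++ [a]).map r).prod = (w.map r).prod * r a := by simp
      have hra := (hr a).1
      have hrb := (hr b).1
      rcases le_or_gt ((w ++ [a]).map r).prod ρ with hwa | hwa
      · refine hST _ ?_ hwa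
        calc r₀ * ρ ≤ r a * (w.map r).prod := by gcongr; exact hr₀ a
          _ = ((w ++ [a]).map r).prod := by rw [ratio_append, mul_comm]
      · refine ih _ hwa ?_
        calc ((w ++ [a]).map r).prod * r b ^ k ≤ (w.map r).prod * r b * r b ^ k := by
              have := (isSimilitude_listMap hr w).pos
              rw [ratio_append]
              gcongr
              exact hb a
          _ = (w.map r).prod * r b ^ (k + 1) := by ring
          _ ≤ ρ := hwk
  obtain ⟨k, hk⟩ := exists_pow_lt_of_lt_one hρ (hr b).2.1
  simpa [listMap] using of_ratio k [] (by simpa using hρ1) (by simpa using hk.le)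

lemma exists_ae_norm_le [ProperSpace V] [IsProbabilityMeasure μ] (h : IsStationaryMeasure φ p μ)
    (hr : ∀ a, IsSimilarityWith (r a) (φ a)) : ∃ R, 1 ≤ R ∧ ∀ᵐ x ∂μ, ‖x‖ ≤ R := by
  have := h.nonempty
  obtain ⟨R, hR0, hR⟩ := exists_mapsTo_closedBall hr
  obtain ⟨b, hb⟩ := Finite.exists_min r
  have norm_listMap_le : ∀ (w : List A) (x : V), ‖listMap φ w x‖ ≤ (w.map r).prod * ‖x‖ + R := by
    intro w x
    have h0 : ‖listMap φ w 0‖ ≤ R :=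
      mem_closedBall_zero_iff.1 (mapsTo_listMap hR w (mem_closedBall_self hR0))
    calc ‖listMap φ w x‖ ≤ ‖listMap φ w x - listMap φ w 0‖ + ‖listMap φ w 0‖ :=
          norm_le_norm_sub_add _ _
      _ ≤ (w.map r).prod * ‖x‖ + R := by
          rw [(isSimilitude_listMap hr w).norm_sub, sub_zero]
          gcongr
  have measure_le : ∀ ρ : ℝ, 1 < ρ → μ (closedBall 0 (R + 1))ᶜ ≤ μ (closedBall 0 ρ)ᶜ := by
    intro ρ hρ
    have hρ0 : 0 < ρ := one_pos.trans hρ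
    have := h.measure_le_mul_of_stopping hr hb (inv_pos.2 hρ0) (inv_lt_one_of_one_lt₀ hρ)
      measurableSet_closedBall.compl MeasurableSet.univ (S := (closedBall 0 (R + 1))ᶜ)
      (M := μ (closedBall 0 ρ)ᶜ) fun w _ hw => by
        rw [Set.preimage_univ, measure_univ, mul_one]
        refine measure_mono fun x hx hxρ => hx ?_
        rw [mem_closedBall_zero_iff] at hxρ ⊢
        calc ‖listMap φ w x‖ ≤ (w.map r).prod * ‖x‖ + R := norm_listMap_le w x
          _ ≤ ρ⁻¹ * ρ + R := by gcongr
          _ = R + 1 := by rw [inv_mul_cancel₀ hρ0.ne', add_comm]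
    simpa using this
  have tight : Tendsto (fun ρ => μ (closedBall 0 ρ)ᶜ) atTop (𝓝 0) := by
    simpa using tendsto_measure_compl_closedBall_of_isTightMeasureSet
      (isTightMeasureSet_singleton (μ := μ)) 0
  have null : μ (closedBall 0 (R + 1))ᶜ = 0 :=
    nonpos_iff_eq_zero.1 (ge_of_tendsto tight ((eventually_gt_atTop 1).mono measure_le))
  refine ⟨R + 1, by simpa using hR0, ?_⟩
  filter_upwards [measure_eq_zero_iff_ae_notMem.1 null] with x hx
  simpa using hx

end IsStationaryMeasure

end Stopping

section Slab

variable {V : Type*} [NormedAddCommGroup V] [InnerProductSpace ℝ V]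

/-- The slab of half-width `ε` around the affine hyperplane `⟪v, x⟫ = t`. -/
def slab (v : V) (t ε : ℝ) : Set V := {x | |⟪v, x⟫ - t| ≤ ε}

lemma isClosed_slab (v : V) (t ε : ℝ) : IsClosed (slab v t ε) :=
  isClosed_le (by fun_prop) continuous_const

lemma slab_mono (v : V) (t : ℝ) {ε ε' : ℝ} (h : ε ≤ ε') : slab v t ε ⊆ slab v t ε' :=
  fun _ hx => le_trans hx h

lemma closedBall_subset_slab {v : V} (hv : ‖v‖ = 1) {x : V} {t ε : ℝ} (hx : x ∈ slab v t ε)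
    (η : ℝ) : closedBall x η ⊆ slab v t (ε + η) := by
  intro y hy
  have inner_sub_le : |⟪v, y - x⟫| ≤ η := by
    simpa [hv] using (abs_real_inner_le_norm v (y - x)).trans
      (mul_le_mul_of_nonneg_left (mem_closedBall_iff_norm.1 hy) (norm_nonneg v))
  calc |⟪v, y⟫ - t| = |(⟪v, x⟫ - t) + ⟪v, y - x⟫| := by rw [inner_sub_right]; ring_nf
    _ ≤ |⟪v, x⟫ - t| + |⟪v, y - x⟫| := abs_add_le _ _
    _ ≤ ε + η := add_le_add hx inner_sub_le

lemma IsSimilitude.exists_preimage_slab_eq [FiniteDimensional ℝ V] {ρ : ℝ} {f : V → V}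
    (hf : IsSimilitude ρ f) {v : V} (hv : ‖v‖ = 1) (t : ℝ) :
    ∃ v' t', ‖v'‖ = 1 ∧ ∀ ε, f ⁻¹' slab v t ε = slab v' t' (ε / ρ) := by
  obtain ⟨L, hL⟩ := hf.exists_linearIsometry
  let L' := L.toLinearIsometryEquiv rfl
  refine ⟨L'.symm v, (t - ⟪v, f 0⟫) / ρ, by simp [hv], fun ε => ?_⟩
  ext x
  have inner_eq : ⟪v, f x⟫ - t = ρ * (⟪L'.symm v, x⟫ - (t - ⟪v, f 0⟫) / ρ) := by
    have hρ := hf.pos.ne'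
    have hx : ⟪L'.symm v, x⟫ = ⟪v, L x⟫ := by
      rw [← L'.inner_map_map, L'.apply_symm_apply]; rfl
    rw [hL x, inner_add_right, inner_smul_right, hx]
    field_simp
    ring
  change |⟪v, f x⟫ - t| ≤ ε ↔ |⟪L'.symm v, x⟫ - (t - ⟪v, f 0⟫) / ρ| ≤ ε / ρ
  rw [inner_eq, abs_mul, abs_of_pos hf.pos, le_div_iff₀' hf.pos]

variable [MeasurableSpace V] (μ : Measure V)

/-- The largest mass which `μ` gives to a slab of half-width `ε`: a higher-dimensional analogue of
Lévy's concentration function. -/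
def slabConcentration (ε : ℝ) : ℝ≥0∞ := ⨆ v ∈ sphere (0 : V) 1, ⨆ t, μ (slab v t ε)

lemma measure_slab_le {v : V} (hv : ‖v‖ = 1) (t ε : ℝ) :
    μ (slab v t ε) ≤ slabConcentration μ ε :=
  le_iSup₂_of_le v (mem_sphere_zero_iff_norm.2 hv) (le_iSup (fun t => μ (slab v t ε)) t)

variable {μ}

lemma slabConcentration_le {ε : ℝ} {M : ℝ≥0∞} (h : ∀ v t, ‖v‖ = 1 → μ (slab v t ε) ≤ M) :
    slabConcentration μ ε ≤ M :=
  iSup₂_le fun v hv => iSup_le fun t => h v t (mem_sphere_zero_iff_norm.1 hv)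

lemma slabConcentration_le_one [IsProbabilityMeasure μ] (ε : ℝ) : slabConcentration μ ε ≤ 1 :=
  slabConcentration_le fun _ _ _ => prob_le_one

variable (μ) in
lemma slabConcentration_mono : Monotone (slabConcentration μ) := fun _ _ hε =>
  slabConcentration_le fun v t hv =>
    (measure_mono (slab_mono v t hε)).trans (measure_slab_le μ hv t _)

lemma IsSimilitude.measure_preimage_slab_le [FiniteDimensional ℝ V] {ρ : ℝ} {f : V → V}
    (hf : IsSimilitude ρ f) {v : V} (hv : ‖v‖ = 1) (t ε : ℝ) :
    μ (f ⁻¹' slab v t ε) ≤ slabConcentration μ (ε / ρ) := by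
  obtain ⟨v', t', hv', hpre⟩ := hf.exists_preimage_slab_eq hv t
  exact (hpre ε).symm ▸ measure_slab_le μ hv' t' _

end Slab

section Irreducible

lemma IsStationaryMeasure.affineSpan_support_eq_top {V A : Type*} [NormedAddCommGroup V]
    [NormedSpace ℝ V] [StrictConvexSpace ℝ V] [SecondCountableTopology V] [MeasurableSpace V]
    [BorelSpace V] [Fintype A] {φ : A → V → V} {r p : A → ℝ} {μ : Measure V} [NeZero μ]
    (h : IsStationaryMeasure φ p μ) (hr : ∀ a, IsSimilarityWith (r a) (φ a))
    (hirr : AffinelyIrreducible φ) : affineSpan ℝ μ.support = ⊤ := by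
  by_contra hspan
  refine hirr ⟨affineSpan ℝ μ.support, ?_, hspan, fun a => ?_⟩
  · exact (affineSpan_nonempty ℝ).2 (Measure.nonempty_support (NeZero.ne μ))
  · obtain ⟨g, hg⟩ := (hr a).isSimilitude.exists_affineMap
    have hsupp := h.mapsTo_support (fun b => (hr b).isSimilitude.continuous) a
    rw [← hg, ← AffineSubspace.coe_map, AffineSubspace.map_span, hg]
    exact affineSpan_mono ℝ hsupp.image_subset

variable {V : Type*} [NormedAddCommGroup V] [InnerProductSpace ℝ V]

lemma exists_inner_ne_of_affineSpan_eq_top {S : Set V} (hS : affineSpan ℝ S = ⊤) {v : V}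
    (hv : v ≠ 0) (t : ℝ) : ∃ x ∈ S, ⟪v, x⟫ ≠ t := by
  by_contra! hvS
  have inner_eq : ∀ x, ⟪v, x⟫ = t := fun x => by
    refine affineSpan_induction (p := fun y => ⟪v, y⟫ = t)
      (hS ▸ AffineSubspace.mem_top ℝ V x : x ∈ affineSpan ℝ S) hvS fun c x y z hx hy hz => ?_
    rw [vsub_eq_sub, vadd_eq_add, inner_add_right, inner_smul_right, inner_sub_right, hx, hy, hz,
      sub_self, mul_zero, zero_add]
  refine hv (inner_self_eq_zero (𝕜 := ℝ).1 ?_)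
  rw [inner_eq v, ← inner_eq 0, inner_zero_right]

variable [MeasurableSpace V] {μ : Measure V}

/-- A lower bound, uniform over all slabs of half-width `δ` whose parameters lie in `Q`, for the
`μ`-mass outside the slab. -/
def HasMassOutsideSlabs (μ : Measure V) (Q : Set (V × ℝ)) : Prop :=
  ∃ δ > 0, ∃ m > 0, ∀ q ∈ Q, m ≤ μ (slab q.1 q.2 δ)ᶜ

lemma HasMassOutsideSlabs.union {P Q : Set (V × ℝ)} (hP : HasMassOutsideSlabs μ P)
    (hQ : HasMassOutsideSlabs μ Q) : HasMassOutsideSlabs μ (P ∪ Q) := by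
  obtain ⟨δ, hδ, m, hm, hP⟩ := hP
  obtain ⟨δ', hδ', m', hm', hQ⟩ := hQ
  refine ⟨min δ δ', lt_min hδ hδ', min m m', lt_min hm hm', ?_⟩
  rintro q (hq | hq)
  · exact (min_le_left _ _).trans <| (hP q hq).trans <| measure_mono <|
      Set.compl_subset_compl.2 <| slab_mono _ _ (min_le_left _ _)
  · exact (min_le_right _ _).trans <| (hQ q hq).trans <| measure_mono <|
      Set.compl_subset_compl.2 <| slab_mono _ _ (min_le_right _ _)

lemma exists_hasMassOutsideSlabs_nhds (hμ : affineSpan ℝ μ.support = ⊤) {v : V} (hv : v ≠ 0)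
    (t : ℝ) : ∃ Q ∈ 𝓝 (v, t), HasMassOutsideSlabs μ Q := by
  obtain ⟨x, hx, hxt⟩ := exists_inner_ne_of_affineSpan_eq_top hμ hv t
  obtain ⟨δ, hδ, hδt⟩ := exists_between (abs_pos.2 (sub_ne_zero.2 hxt))
  have nhds_off : ∀ᶠ z : (V × ℝ) × V in 𝓝 (v, t) ×ˢ 𝓝 x, δ < |⟪z.1.1, z.2⟫ - z.1.2| := by
    rw [← nhds_prod_eq]
    exact (by fun_prop : Continuous fun z : (V × ℝ) × V => |⟪z.1.1, z.2⟫ - z.1.2|).continuousAt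
      |>.eventually_const_lt hδt
  obtain ⟨Q, hQ, U, hU, hQU⟩ := Filter.eventually_prod_iff.1 nhds_off
  refine ⟨{q | Q q}, hQ, δ, hδ, μ {y | U y}, (Measure.mem_support_iff_forall x).1 hx _ hU,
    fun q hq => measure_mono fun y hy => ?_⟩
  exact not_le.2 (hQU hq hy)

lemma exists_hasMassOutsideSlabs_of_lt_abs (hμ : μ.support.Nonempty) :
    ∃ R, HasMassOutsideSlabs μ {q : V × ℝ | ‖q.1‖ = 1 ∧ R < |q.2|} := by
  obtain ⟨x, hx⟩ := hμ
  have ball_mem : ball 0 (‖x‖ + 1) ∈ 𝓝 x := isOpen_ball.mem_nhds (by simp)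
  refine ⟨‖x‖ + 2, 1, one_pos, μ (ball 0 (‖x‖ + 1)),
    (Measure.mem_support_iff_forall x).1 hx _ ball_mem, ?_⟩
  rintro ⟨v, t⟩ ⟨hv, ht⟩
  refine measure_mono fun y hy hys => ?_
  have inner_le : |⟪v, y⟫| ≤ ‖y‖ := by simpa [show ‖v‖ = 1 from hv] using abs_real_inner_le_norm v y
  have abs_t_le : |t| ≤ |⟪v, y⟫| + |⟪v, y⟫ - t| := by
    simpa using abs_sub ⟪v, y⟫ (⟪v, y⟫ - t)
  have hys' : |⟪v, y⟫ - t| ≤ 1 := hys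
  rw [mem_ball_zero_iff] at hy
  linarith

lemma exists_slabConcentration_lt_one [FiniteDimensional ℝ V] [BorelSpace V]
    [IsProbabilityMeasure μ] (hμ : affineSpan ℝ μ.support = ⊤) :
    ∃ δ > 0, slabConcentration μ δ < 1 := by
  obtain ⟨R, hR⟩ := exists_hasMassOutsideSlabs_of_lt_abs
    (Measure.nonempty_support (IsProbabilityMeasure.ne_zero μ))
  have compact_part : HasMassOutsideSlabs μ (sphere (0 : V) 1 ×ˢ Set.Icc (-R) R) := by
    refine ((isCompact_sphere 0 1).prod isCompact_Icc).induction_on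
      ⟨1, one_pos, 1, one_pos, by simp⟩ ?_ (fun _ _ => HasMassOutsideSlabs.union) ?_
    · rintro P Q hPQ ⟨δ, hδ, m, hm, hQ⟩
      exact ⟨δ, hδ, m, hm, fun q hq => hQ q (hPQ hq)⟩
    · rintro ⟨v, t⟩ ⟨hv, -⟩
      obtain ⟨Q, hQ, hmass⟩ := exists_hasMassOutsideSlabs_nhds hμ
        (ne_zero_of_mem_unit_sphere ⟨v, hv⟩) t
      exact ⟨Q, mem_nhdsWithin_of_mem_nhds hQ, hmass⟩
  obtain ⟨δ, hδ, m, hm, hall⟩ := compact_part.union hR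
  refine ⟨δ, hδ, ?_⟩
  refine (slabConcentration_le (M := 1 - m) fun v t hv => ?_).trans_lt
    (ENNReal.sub_lt_self ENNReal.one_ne_top one_ne_zero hm.ne')
  have hm_le : m ≤ μ (slab v t δ)ᶜ := by
    refine hall (v, t) ?_
    rcases le_or_gt |t| R with ht | ht
    · exact .inl ⟨mem_sphere_zero_iff_norm.2 hv, abs_le.1 ht⟩
    · exact .inr ⟨hv, ht⟩
  calc μ (slab v t δ) = 1 - μ (slab v t δ)ᶜ := by
        rw [← prob_compl_eq_one_sub (isClosed_slab v t δ).measurableSet.compl, compl_compl]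
    _ ≤ 1 - m := tsub_le_tsub_left hm_le 1

end Irreducible

section Decay

lemma exists_le_rpow_of_le_mul {g : ℝ → ℝ≥0∞} (hg : ∀ ε, g ε ≤ 1) {c : ℝ≥0∞} (hc : c < 1)
    {l ε₀ : ℝ} (hl : 1 < l) (hε₀ : 0 < ε₀)
    (h : ∀ ε, 0 < ε → ε < ε₀ → g ε ≤ c * g (l * ε)) :
    ∃ α : ℝ, 0 < α ∧ ∀ ε > 0, g ε ≤ ENNReal.ofReal ((ε / ε₀) ^ α) := by
  obtain ⟨b, hb0, hcb, hb1⟩ : ∃ b : ℝ, 0 < b ∧ c ≤ ENNReal.ofReal b ∧ b < 1 := by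
    refine ⟨max c.toReal (1 / 2), by simp, ?_, max_lt ?_ (by norm_num)⟩
    · exact (ENNReal.ofReal_toReal hc.ne_top).symm.le.trans
        (ENNReal.ofReal_le_ofReal (le_max_left _ _))
    · simpa using ENNReal.toReal_strict_mono ENNReal.one_ne_top hc
  have hl0 : 0 < l := one_pos.trans hl
  set α := Real.logb l b⁻¹
  have hα : 0 < α := Real.logb_pos hl ((one_lt_inv₀ hb0).2 hb1)
  have b_mul_rpow : b * l ^ α = 1 := by
    rw [Real.rpow_logb hl0 hl.ne' (inv_pos.2 hb0), mul_inv_cancel₀ hb0.ne']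
  have of_le : ∀ ε, ε₀ ≤ ε → g ε ≤ ENNReal.ofReal ((ε / ε₀) ^ α) := fun ε hε =>
    (hg ε).trans <| ENNReal.one_le_ofReal.2 <| Real.one_le_rpow ((one_le_div hε₀).2 hε) hα.le
  have of_le_pow_mul : ∀ (k : ℕ) (ε : ℝ), 0 < ε → ε₀ ≤ l ^ k * ε →
      g ε ≤ ENNReal.ofReal ((ε / ε₀) ^ α) := by
    intro k
    induction k with
    | zero => exact fun ε _ hε => of_le ε (by simpa using hε)
    | succ k ih =>
      intro ε hε hk
      rcases le_or_gt ε₀ ε with hε' | hε'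
      · exact of_le ε hε'
      calc g ε ≤ c * g (l * ε) := h ε hε hε'
        _ ≤ ENNReal.ofReal b * ENNReal.ofReal ((l * ε / ε₀) ^ α) :=
            mul_le_mul' hcb (ih _ (by positivity) (by rwa [← mul_assoc, ← pow_succ]))
        _ = ENNReal.ofReal ((ε / ε₀) ^ α) := by
            rw [← ENNReal.ofReal_mul hb0.le, mul_div_assoc, Real.mul_rpow hl0.le (by positivity),
              ← mul_assoc, b_mul_rpow, one_mul]
  refine ⟨α, hα, fun ε hε => ?_⟩
  obtain ⟨k, hk⟩ := pow_unbounded_of_one_lt (ε₀ / ε) hl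
  exact of_le_pow_mul k ε hε ((div_le_iff₀ hε).1 hk.le)

variable {V : Type*} [NormedAddCommGroup V] [InnerProductSpace ℝ V] [FiniteDimensional ℝ V]
  [MeasurableSpace V] {μ : Measure V} [IsProbabilityMeasure μ]

lemma IsSimilitude.measure_preimage_le_slabConcentration_mul {ρ : ℝ} {f : V → V}
    (hf : IsSimilitude ρ f) {R : ℝ} (hR : ∀ᵐ x ∂μ, ‖x‖ ≤ R) {η ε : ℝ} (hη : ρ * R ≤ η)
    {S T : Set V} (hST : ∀ x ∈ S, closedBall x (2 * η) ⊆ T)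
    (hS : ∃ v t, ‖v‖ = 1 ∧ closedBall (f 0) η ∩ S ⊆ slab v t ε) :
    μ (f ⁻¹' S) ≤ slabConcentration μ (ε / ρ) * μ (f ⁻¹' T) := by
  have hρ := hf.pos
  have mem_ball : ∀ x, ‖x‖ ≤ R → f x ∈ closedBall (f 0) η := fun x hx => by
    rw [mem_closedBall_iff_norm, hf.norm_sub, sub_zero]
    exact (mul_le_mul_of_nonneg_left hx hρ.le).trans hη
  by_cases hmeet : ∃ x, ‖x‖ ≤ R ∧ f x ∈ S
  · obtain ⟨x, hxR, hxS⟩ := hmeet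
    obtain ⟨v, t, hv, hslab⟩ := hS
    have full : 1 ≤ μ (f ⁻¹' T) := by
      rw [← measure_univ (μ := μ)]
      refine measure_mono_ae (hR.mono fun y hy _ => hST _ hxS ?_)
      calc dist (f y) (f x) ≤ dist (f y) (f 0) + dist (f x) (f 0) := dist_triangle_right _ _ _
        _ ≤ η + η := add_le_add (mem_ball y hy) (mem_ball x hxR)
        _ = 2 * η := (two_mul η).symm
    calc μ (f ⁻¹' S) ≤ μ (f ⁻¹' slab v t ε) :=
          measure_mono_ae (hR.mono fun y hy hyS => hslab ⟨mem_ball y hy, hyS⟩)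
      _ ≤ slabConcentration μ (ε / ρ) := hf.measure_preimage_slab_le hv t ε
      _ ≤ slabConcentration μ (ε / ρ) * μ (f ⁻¹' T) := le_mul_of_one_le_right' full
  · have null : μ (f ⁻¹' S) = 0 := measure_eq_zero_iff_ae_notMem.2 <|
      hR.mono fun x hx hxS => hmeet ⟨x, hx, hxS⟩
    rw [null]
    exact zero_le

namespace IsStationaryMeasure

variable {A : Type*} [Fintype A] [BorelSpace V] {φ : A → V → V} {r p : A → ℝ}

-- Only cylinders of diameter about `η` matter: each is a similar copy of `μ` inside an `η`-ball.
lemma exists_measure_le_slabConcentration_mul (h : IsStationaryMeasure φ p μ)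
    (hr : ∀ a, IsSimilarityWith (r a) (φ a)) :
    ∃ K, 1 ≤ K ∧ ∀ (η ε : ℝ) (S T : Set V), 0 < η → η < 1 → 0 ≤ ε → MeasurableSet S →
      MeasurableSet T → (∀ x ∈ S, closedBall x (2 * η) ⊆ T) →
      (∀ c, ∃ v t, ‖v‖ = 1 ∧ closedBall c η ∩ S ⊆ slab v t ε) →
      μ S ≤ slabConcentration μ (K / η * ε) * μ T := by
  have := h.nonempty
  obtain ⟨R, hR1, hR⟩ := h.exists_ae_norm_le hr
  obtain ⟨a, ha⟩ := Finite.exists_min r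
  have hra := (hr a).1
  refine ⟨R / r a, ?_, fun η ε S T hη0 hη1 hε hSm hTm hST hS => ?_⟩
  · exact (one_le_div hra).2 ((hr a).2.1.le.trans hR1)
  have hR0 : 0 < R := one_pos.trans_le hR1
  refine h.measure_le_mul_of_stopping hr ha (div_pos hη0 hR0)
    ((div_lt_one hR0).2 (hη1.trans_le hR1)) hSm hTm fun w hw hw' => ?_
  refine ((isSimilitude_listMap hr w).measure_preimage_le_slabConcentration_mul hR
    ((le_div_iff₀ hR0).1 hw') hST (hS _)).trans ?_
  gcongr
  refine slabConcentration_mono μ ?_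
  calc ε / (w.map r).prod ≤ ε / (r a * (η / R)) := by gcongr
    _ = R / r a / η * ε := by field_simp

theorem exists_slabConcentration_le_rpow (h : IsStationaryMeasure φ p μ)
    (hr : ∀ a, IsSimilarityWith (r a) (φ a)) (hirr : AffinelyIrreducible φ) :
    ∃ C α : ℝ, 0 < C ∧ 0 < α ∧ ∀ ε > 0, slabConcentration μ ε ≤ ENNReal.ofReal ((C * ε) ^ α) := by
  obtain ⟨K, hK, hle⟩ := h.exists_measure_le_slabConcentration_mul hr
  obtain ⟨δ, hδ, hδ1⟩ :=
    exists_slabConcentration_lt_one (h.affineSpan_support_eq_top hr hirr)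
  obtain ⟨η, hη, hηδ⟩ := exists_between (show 0 < min 1 (δ / 3) by positivity)
  rw [lt_min_iff] at hηδ
  have contraction : ∀ ε, 0 < ε → ε < η →
      slabConcentration μ ε ≤ slabConcentration μ δ * slabConcentration μ (K / η * ε) := by
    refine fun ε hε hεη => slabConcentration_le fun v t hv => ?_
    have slab_le := hle η ε (slab v t ε) (slab v t (ε + 2 * η)) hη hηδ.1 hε.le
      (isClosed_slab _ _ _).measurableSet (isClosed_slab _ _ _).measurableSet
      (fun x hx => closedBall_subset_slab hv hx _)
      fun c => ⟨v, t, hv, Set.inter_subset_right⟩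
    rw [mul_comm]
    refine slab_le.trans (mul_le_mul' le_rfl ?_)
    exact (measure_slab_le μ hv t _).trans (slabConcentration_mono μ (by linarith))
  obtain ⟨α, hα, hrpow⟩ := exists_le_rpow_of_le_mul slabConcentration_le_one hδ1
    ((one_lt_div hη).2 (hηδ.1.trans_le hK)) hη contraction
  exact ⟨η⁻¹, α, inv_pos.2 hη, hα, fun ε hε => by simpa [div_eq_inv_mul] using hrpow ε hε⟩

end IsStationaryMeasure

end Decay

section Simplex

open Matrix Nat

variable {ι : Type*} [Fintype ι]

/-- The square matrix with rows `(x k, 1)`. Up to the factor `n!`, where `n` is the number of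
coordinates, its determinant is the signed volume of the simplex with vertices `x k`. -/
def simplexMatrix (x : ι ⊕ Unit → ι → ℝ) : Matrix (ι ⊕ Unit) (ι ⊕ Unit) ℝ :=
  .of fun k => Sum.elim (x k) 1

/-- The rational point `p / q`. -/
def ratPoint (pq : (ι → ℤ) × ℕ) : EuclideanSpace ℝ ι := WithLp.toLp 2 fun i => pq.1 i / pq.2

lemma abs_det_simplexMatrix_le [DecidableEq ι] {x : ι ⊕ Unit → ι → ℝ} {c : ι → ℝ} {ρ : ℝ}
    (hρ : 0 < ρ) (hx : ∀ k i, |x k i - c i| ≤ ρ) :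
    |(simplexMatrix x).det| ≤ (Fintype.card ι + 1)! * ρ ^ Fintype.card ι := by
  set N := simplexMatrix fun k i => (x k i - c i) / ρ
  set T : Matrix (ι ⊕ Unit) (ι ⊕ Unit) ℝ := fromBlocks (ρ • 1) 0 (.of fun _ => c) 1
  have factor : simplexMatrix x = N * T := by
    ext k j
    rw [mul_apply, Fintype.sum_sum_type]
    rcases j with j | j
    · simp [N, T, simplexMatrix, one_apply, hρ.ne']
    · simp [N, T, simplexMatrix]
  have det_T : T.det = ρ ^ Fintype.card ι := by simp [T]
  have det_N : |N.det| ≤ (Fintype.card ι + 1)! := by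
    have entries_le : ∀ k j, AbsoluteValue.abs (N k j) ≤ 1 := by
      rintro k (j | j)
      · simpa [N, simplexMatrix, abs_div, abs_of_pos hρ] using (div_le_one hρ).2 (hx k j)
      · simp [N, simplexMatrix]
    simpa using det_le entries_le
  rw [factor, det_mul, det_T, abs_mul, abs_of_pos (pow_pos hρ _)]
  gcongr

lemma prod_mul_det_simplexMatrix_eq_intCast [DecidableEq ι] {m : ι ⊕ Unit → (ι → ℤ) × ℕ}
    (hm : ∀ k, (m k).2 ≠ 0) :
    (∏ k, ((m k).2 : ℝ)) * (simplexMatrix fun k => ratPoint (m k)).det =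
      ((Matrix.of fun k => Sum.elim (m k).1 fun _ => ((m k).2 : ℤ)).det : ℤ) := by
  rw [Int.cast_det, ← det_diagonal, ← det_mul]
  congr 1
  ext k j
  have := hm k
  rw [diagonal_mul]
  rcases j with j | j
  · simp [simplexMatrix, ratPoint]
    field_simp
  · simp [simplexMatrix]

lemma det_simplexMatrix_ratPoint_eq_zero [DecidableEq ι] {m : ι ⊕ Unit → (ι → ℤ) × ℕ} {c : ι → ℝ}
    {ρ Q : ℝ} (hρ : 0 < ρ)
    (hQ : Q ^ (Fintype.card ι + 1) * ((Fintype.card ι + 1)! * ρ ^ Fintype.card ι) < 1)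
    (hm : ∀ k, (m k).2 ≠ 0) (hmQ : ∀ k, ((m k).2 : ℝ) ≤ Q)
    (hmc : ∀ k i, |ratPoint (m k) i - c i| ≤ ρ) :
    (simplexMatrix fun k => ratPoint (m k)).det = 0 := by
  have det_int := prod_mul_det_simplexMatrix_eq_intCast hm
  set D := (Matrix.of fun k => Sum.elim (m k).1 fun _ => ((m k).2 : ℤ)).det
  have prod_le : ∏ k, ((m k).2 : ℝ) ≤ Q ^ (Fintype.card ι + 1) := by
    calc ∏ k, ((m k).2 : ℝ) ≤ ∏ _k : ι ⊕ Unit, Q :=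
          Finset.prod_le_prod (fun k _ => (m k).2.cast_nonneg) fun k _ => hmQ k
      _ = Q ^ (Fintype.card ι + 1) := by
          rw [Finset.prod_const, Finset.card_univ, Fintype.card_sum, Fintype.card_unit]
  have abs_D_lt : |(D : ℝ)| < 1 := by
    rw [← det_int, abs_mul, abs_of_nonneg (by positivity)]
    refine (mul_le_mul prod_le (abs_det_simplexMatrix_le hρ hmc) (abs_nonneg _) ?_).trans_lt hQ
    exact le_trans (by positivity) prod_le
  have D_eq_zero : D = 0 := Int.abs_lt_one_iff.1 (by exact_mod_cast abs_D_lt)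
  rw [D_eq_zero, Int.cast_zero] at det_int
  refine (mul_eq_zero.1 det_int).resolve_left ?_
  exact Finset.prod_ne_zero_iff.2 fun k _ => Nat.cast_ne_zero.2 (hm k)

lemma exists_det_simplexMatrix_ne_zero [DecidableEq ι] {S : Set (EuclideanSpace ℝ ι)}
    (hS : affineSpan ℝ S = ⊤) :
    ∃ x : ι ⊕ Unit → EuclideanSpace ℝ ι, (∀ k, x k ∈ S) ∧
      (simplexMatrix fun k => x k).det ≠ 0 := by
  obtain ⟨s, hsS, b, hb⟩ := AffineBasis.exists_affine_subbasis hS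
  have := b.finite
  have := Fintype.ofFinite s
  have e : ι ⊕ Unit ≃ s := Fintype.equivOfCardEq (by
    rw [b.card_eq_finrank_add_one]; simp)
  refine ⟨fun k => e k, fun k => hsS (e k).2, fun hdet => ?_⟩
  obtain ⟨u, hu, hMu⟩ := exists_mulVec_eq_zero_iff.2 hdet
  set v : EuclideanSpace ℝ ι := WithLp.toLp 2 fun i => u (.inl i)
  have inner_eq : ∀ x ∈ s, ⟪v, x⟫ = -u (.inr ()) := fun x hx => by
    have row_eq : ∑ i, x i * u (.inl i) + u (.inr ()) = 0 := by
      simpa [simplexMatrix, mulVec, dotProduct] using congrFun hMu (e.symm ⟨x, hx⟩)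
    rw [← eq_neg_of_add_eq_zero_left row_eq]
    simp [v, PiLp.inner_apply]
  have v_eq_zero : v = 0 := by
    by_contra hv
    have hspan : affineSpan ℝ s = ⊤ := by simpa [hb] using b.tot
    obtain ⟨x, hx, hne⟩ := exists_inner_ne_of_affineSpan_eq_top hspan hv (-u (.inr ()))
    exact hne (inner_eq x hx)
  refine hu (funext fun j => ?_)
  rcases j with i | ⟨⟩
  · exact congrFun (congrArg WithLp.ofLp v_eq_zero) i
  · simpa [v_eq_zero] using (inner_eq _ (e (.inr ())).2).symm

lemma exists_inner_eq_of_affineSpan_ne_top {V : Type*} [NormedAddCommGroup V]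
    [InnerProductSpace ℝ V] [FiniteDimensional ℝ V] [Nontrivial V] {S : Set V}
    (hS : affineSpan ℝ S ≠ ⊤) : ∃ v t, ‖v‖ = 1 ∧ ∀ x ∈ S, ⟪v, x⟫ = t := by
  obtain ⟨v, hv, hvS⟩ : ∃ v ∈ (vectorSpan ℝ S)ᗮ, v ≠ 0 := by
    refine Submodule.exists_mem_ne_zero_of_ne_bot fun hbot => hS ?_
    exact AffineSubspace.affineSpan_eq_top_iff_vectorSpan_eq_top_of_nontrivial ℝ V V |>.2
      (Submodule.orthogonal_eq_bot_iff.1 hbot)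
  have hne : ‖v‖ ≠ 0 := norm_ne_zero_iff.2 hvS
  have norm_eq : ‖‖v‖⁻¹ • v‖ = 1 := by simp [norm_smul, hne]
  rcases S.eq_empty_or_nonempty with rfl | ⟨x₀, hx₀⟩
  · exact ⟨_, 0, norm_eq, by simp⟩
  · refine ⟨_, ⟪‖v‖⁻¹ • v, x₀⟫, norm_eq, fun x hx => ?_⟩
    rw [← sub_eq_zero, ← inner_sub_right, inner_smul_left, ← vsub_eq_sub,
      Submodule.inner_left_of_mem_orthogonal (vsub_mem_vectorSpan ℝ hx hx₀) hv, mul_zero]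

/-- Davenport's simplex lemma. -/
lemma exists_inner_ratPoint_eq [Nonempty ι] (c : EuclideanSpace ℝ ι) {ρ Q : ℝ} (hρ : 0 < ρ)
    (hQ : Q ^ (Fintype.card ι + 1) * ((Fintype.card ι + 1)! * ρ ^ Fintype.card ι) < 1) :
    ∃ v t, ‖v‖ = 1 ∧ ∀ pq : (ι → ℤ) × ℕ, pq.2 ≠ 0 → (pq.2 : ℝ) ≤ Q →
      ratPoint pq ∈ closedBall c ρ → ⟪v, ratPoint pq⟫ = t := by
  classical
  set S := ratPoint '' {pq : (ι → ℤ) × ℕ | pq.2 ≠ 0 ∧ (pq.2 : ℝ) ≤ Q ∧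
    ratPoint pq ∈ closedBall c ρ}
  have span_ne_top : affineSpan ℝ S ≠ ⊤ := fun htop => by
    obtain ⟨x, hx, hdet⟩ := exists_det_simplexMatrix_ne_zero htop
    choose m hm hmx using hx
    refine hdet ?_
    simp_rw [← hmx]
    refine det_simplexMatrix_ratPoint_eq_zero (c := c) hρ hQ (fun k => (hm k).1)
      (fun k => (hm k).2.1) fun k i => ?_
    exact (PiLp.norm_apply_le (ratPoint (m k) - c) i).trans (mem_closedBall_iff_norm.1 (hm k).2.2)
  obtain ⟨v, t, hv, hvS⟩ := exists_inner_eq_of_affineSpan_ne_top span_ne_top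
  exact ⟨v, t, hv, fun pq h0 hQ' hc => hvS _ ⟨pq, ⟨h0, hQ', hc⟩, rfl⟩⟩

end Simplex

section NearRational

variable {ι : Type*} [Fintype ι]

/-- The closed `ε`-neighbourhood of the rational points with denominator in `[N, 2 * N)`. -/
def nearRational (N : ℕ) (ε : ℝ) : Set (EuclideanSpace ℝ ι) :=
  {x | ∃ pq : (ι → ℤ) × ℕ, N ≤ pq.2 ∧ pq.2 < 2 * N ∧ x ∈ closedBall (ratPoint pq) ε}

lemma measurableSet_nearRational (N : ℕ) (ε : ℝ) :
    MeasurableSet (nearRational N ε : Set (EuclideanSpace ℝ ι)) := by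
  have eq_biUnion : (nearRational N ε : Set (EuclideanSpace ℝ ι)) =
      ⋃ pq ∈ {pq : (ι → ℤ) × ℕ | N ≤ pq.2 ∧ pq.2 < 2 * N}, closedBall (ratPoint pq) ε := by
    ext x
    simp only [nearRational, Set.mem_ofPred_eq, Set.mem_iUnion₂, exists_prop, and_assoc]
  rw [eq_biUnion]
  exact .biUnion (Set.to_countable _) fun _ _ => isClosed_closedBall.measurableSet

lemma exists_closedBall_inter_nearRational_subset_slab [Nonempty ι] (c : EuclideanSpace ℝ ι)
    {N : ℕ} {η ε : ℝ} (hpos : 0 < η + ε)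
    (hN : (2 * N : ℝ) ^ (Fintype.card ι + 1) *
      ((Fintype.card ι + 1).factorial * (η + ε) ^ Fintype.card ι) < 1) :
    ∃ v t, ‖v‖ = 1 ∧ closedBall c η ∩ nearRational N ε ⊆ slab v t ε := by
  obtain ⟨v, t, hv, inner_eq⟩ := exists_inner_ratPoint_eq c hpos hN
  refine ⟨v, t, hv, ?_⟩
  rintro x ⟨hxc, pq, hle, hlt, hx⟩
  have ratPoint_mem : ratPoint pq ∈ closedBall c (η + ε) := by
    rw [mem_closedBall] at hxc hx ⊢
    rw [dist_comm] at hx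
    linarith [dist_triangle (ratPoint pq) x c]
  have mem_slab : ratPoint pq ∈ slab v t 0 := by
    have := inner_eq pq (by lia) (by exact_mod_cast hlt.le) ratPoint_mem
    simp [slab, this]
  simpa using closedBall_subset_slab hv mem_slab ε hx

variable (ι) in
/-- The exponent `1 + 1/d` of Dirichlet's theorem on simultaneous approximation of `d` reals,
where `d` is the number of elements of `ι`. -/
def dirichletExponent : ℝ := (Fintype.card ι + 1) / Fintype.card ι

lemma dirichletExponent_pos [Nonempty ι] : 0 < dirichletExponent ι := by
  have := Fintype.card_pos (α := ι)
  unfold dirichletExponent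
  positivity

variable (ι) in
lemma pow_mul_rpow_neg_dirichletExponent_pow [Nonempty ι] {x : ℝ} (hx : 0 < x) :
    x ^ (Fintype.card ι + 1) * (x ^ (-dirichletExponent ι)) ^ Fintype.card ι = 1 := by
  have : (Fintype.card ι : ℝ) ≠ 0 := by simp
  rw [← Real.rpow_mul_natCast hx.le, neg_mul, dirichletExponent, div_mul_cancel₀ _ this,
    Real.rpow_neg hx.le, ← Nat.cast_add_one, Real.rpow_natCast]
  exact mul_inv_cancel₀ (pow_pos hx _).ne'

lemma exists_pos_mul_pow_lt_one (B : ℝ) {n : ℕ} (hn : n ≠ 0) :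
    ∃ κ : ℝ, 0 < κ ∧ κ < 1 ∧ B * κ ^ n < 1 := by
  have tendsto_zero : Tendsto (fun κ : ℝ => B * κ ^ n) (𝓝[>] 0) (𝓝 0) := by
    have cont : Continuous fun κ : ℝ => B * κ ^ n := by fun_prop
    simpa [hn] using (cont.tendsto 0).mono_left nhdsWithin_le_nhds
  have lt_one : ∀ᶠ κ : ℝ in 𝓝[>] 0, B * κ ^ n < 1 := tendsto_zero.eventually_lt_const one_pos
  obtain ⟨κ, hlt, hκ⟩ := (lt_one.and (Ioo_mem_nhdsGT one_pos)).exists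
  exact ⟨κ, hκ.1, hκ.2, hlt⟩

lemma IsStationaryMeasure.exists_measure_nearRational_le [Nonempty ι] {A : Type*} [Fintype A]
    {φ : A → EuclideanSpace ℝ ι → EuclideanSpace ℝ ι} {r p : A → ℝ}
    {μ : Measure (EuclideanSpace ℝ ι)} [IsProbabilityMeasure μ] (h : IsStationaryMeasure φ p μ)
    (hr : ∀ a, IsSimilarityWith (r a) (φ a)) :
    ∃ κ K : ℝ, 0 < κ ∧ 0 < K ∧ ∀ (N : ℕ) (L : ℝ), N ≠ 0 → 0 < L → L ≤ κ →
      μ (nearRational N (L * (N : ℝ) ^ (-dirichletExponent ι))) ≤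
        slabConcentration μ (K * L) := by
  obtain ⟨K, hK, measure_le⟩ := h.exists_measure_le_slabConcentration_mul hr
  set d := Fintype.card ι
  obtain ⟨κ, hκ0, hκ1, hκ⟩ :=
    exists_pos_mul_pow_lt_one (2 ^ (d + 1) * ((d + 1).factorial * 2 ^ d))
      (Fintype.card_ne_zero (α := ι))
  refine ⟨κ, K / κ, hκ0, by positivity, fun N L hN hL hLκ => ?_⟩
  have hN0 : (0 : ℝ) < N := by positivity
  set δ := (N : ℝ) ^ (-dirichletExponent ι)
  have δ_pos : 0 < δ := by positivity
  have δ_le_one : δ ≤ 1 := Real.rpow_le_one_of_one_le_of_nonpos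
    (by exact_mod_cast Nat.one_le_iff_ne_zero.2 hN) (neg_nonpos.2 dirichletExponent_pos.le)
  have volume_lt : (2 * N : ℝ) ^ (d + 1) * ((d + 1).factorial * (κ * δ + L * δ) ^ d) < 1 := by
    calc (2 * N : ℝ) ^ (d + 1) * ((d + 1).factorial * (κ * δ + L * δ) ^ d)
        ≤ (2 * N) ^ (d + 1) * ((d + 1).factorial * (κ * δ + κ * δ) ^ d) := by gcongr
      _ = 2 ^ (d + 1) * ((d + 1).factorial * 2 ^ d) * κ ^ d * (N ^ (d + 1) * δ ^ d) := by
          rw [← two_mul, mul_pow, mul_pow, mul_pow]; ring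
      _ < 1 := by rwa [pow_mul_rpow_neg_dirichletExponent_pow ι hN0, mul_one]
  have le_slab := measure_le (κ * δ) (L * δ) _ Set.univ (by positivity) (by nlinarith)
    (by positivity) (measurableSet_nearRational N (L * δ)) .univ
    (fun _ _ => Set.subset_univ _)
    fun c => exists_closedBall_inter_nearRational_subset_slab c (by positivity) volume_lt
  rw [measure_univ, mul_one] at le_slab
  refine le_slab.trans_eq (congrArg _ ?_)
  field_simp

end NearRational

section Khintchine

lemma finite_forall_abs_sub_div_le {ι : Type*} [Finite ι] (x : ι → ℝ) (c : ℝ) {q : ℕ}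
    (hq : 0 < q) : {p : ι → ℤ | ∀ i, |x i - p i / q| ≤ c}.Finite := by
  refine (Set.Finite.pi' fun i => Set.finite_Icc ⌈q * (x i - c)⌉ ⌊q * (x i + c)⌋).subset ?_
  intro p hp i
  have hq' : (0 : ℝ) < q := by exact_mod_cast hq
  have hi := abs_le.1 (hp i)
  rw [Set.mem_Icc, Int.ceil_le, Int.le_floor, ← le_div_iff₀' hq', ← div_le_iff₀' hq']
  constructor <;> linarith

lemma norm_le_sqrt_card_mul {ι : Type*} [Fintype ι] {x : EuclideanSpace ℝ ι} {c : ℝ}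
    (hc : 0 ≤ c) (hx : ∀ i, |x i| ≤ c) : ‖x‖ ≤ √(Fintype.card ι) * c := by
  rw [EuclideanSpace.norm_eq, ← Real.sqrt_sq hc, ← Real.sqrt_mul (Nat.cast_nonneg _)]
  refine Real.sqrt_le_sqrt ?_
  calc ∑ i, ‖x i‖ ^ 2 ≤ ∑ _i : ι, c ^ 2 :=
        Finset.sum_le_sum fun i _ => pow_le_pow_left₀ (norm_nonneg _) (hx i) 2
    _ = Fintype.card ι * c ^ 2 := by simp

lemma measure_frequently_eq_zero_of_eventually_le {X : Type*} [MeasurableSpace X] {μ : Measure X}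
    {S : ℕ → Set X} {f : ℕ → ℝ} (hf : Summable f)
    (hle : ∀ᶠ n in atTop, μ (S n) ≤ ENNReal.ofReal (f n)) :
    μ {x | ∃ᶠ n in atTop, x ∈ S n} = 0 := by
  obtain ⟨k, hk⟩ := eventually_atTop.1 hle
  have tsum_ne_top : ∑' n, μ (S (n + k)) ≠ ∞ :=
    ne_top_of_le_ne_top ((summable_nat_add_iff k).2 hf).tsum_ofReal_ne_top
      (ENNReal.tsum_le_tsum fun n => hk _ (Nat.le_add_left k n))
  refine measure_mono_null (fun x (hx : ∃ᶠ n in atTop, x ∈ S n) => ?_)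
    (measure_setOfPred_frequently_eq_zero (p := fun n x => x ∈ S (n + k)) tsum_ne_top)
  rwa [← map_add_atTop_eq_nat k, frequently_map] at hx

variable {d : ℕ}

lemma exists_le_of_mem_WApprox {Ψ : ℕ → ℝ} {x : EuclideanSpace ℝ (Fin d)} (hx : x ∈ WApprox d Ψ)
    (N : ℕ) : ∃ pq : (Fin d → ℤ) × ℕ, N ≤ pq.2 ∧ 0 < pq.2 ∧
      ∀ i, |x i - pq.1 i / pq.2| ≤ Ψ pq.2 := by
  by_contra! hlarge
  refine hx (((Set.finite_Ioo 0 N).biUnion fun q hq =>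
    (finite_forall_abs_sub_div_le x (Ψ q) hq.1).image (·, q)).subset ?_)
  rintro ⟨p, q⟩ ⟨hq, hp⟩
  refine Set.mem_biUnion (x := q) ⟨hq, ?_⟩ ⟨p, hp, rfl⟩
  by_contra! hN
  obtain ⟨i, hi⟩ := hlarge (p, q) hN hq
  exact (hp i).not_gt hi

lemma frequently_mem_nearRational {Ψ : ℕ → ℝ} {m : ℕ} (hpos : ∀ q, m ≤ q → 0 < Ψ q)
    (hanti : AntitoneOn Ψ (Set.Ici m)) {x : EuclideanSpace ℝ (Fin d)} (hx : x ∈ WApprox d Ψ) :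
    ∃ᶠ n in atTop, x ∈ nearRational (2 ^ n) (√d * Ψ (2 ^ n)) := by
  refine frequently_atTop.2 fun k => ?_
  obtain ⟨⟨p, q⟩, hkq, hq0, happrox⟩ := exists_le_of_mem_WApprox hx (2 ^ max k m)
  set n := Nat.log 2 q
  have le_n : max k m ≤ n := Nat.le_log_of_pow_le one_lt_two hkq
  have pow_le : 2 ^ n ≤ q := Nat.pow_log_le_self 2 hq0.ne'
  have lt_pow : q < 2 * 2 ^ n := by
    rw [← pow_succ']; exact Nat.lt_pow_succ_log_self one_lt_two q
  have le_pow : m ≤ 2 ^ n :=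
    ((le_max_right k m).trans le_n).trans Nat.lt_two_pow_self.le
  refine ⟨n, (le_max_left k m).trans le_n, (p, q), pow_le, lt_pow, ?_⟩
  have coord_le : ∀ i, |(x - ratPoint (p, q)) i| ≤ Ψ (2 ^ n) := fun i =>
    (happrox i).trans (hanti le_pow (le_pow.trans pow_le) pow_le)
  rw [mem_closedBall_iff_norm]
  simpa using norm_le_sqrt_card_mul (hpos _ le_pow).le coord_le

/-- For `α = d` the series is comparable to the one in Khintchine's theorem, `∑ (q * Ψ q) ^ d`. -/
theorem IsStationaryMeasure.exists_measure_WApprox_eq_zero (hd : 0 < d) {A : Type*} [Fintype A]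
    {φ : A → EuclideanSpace ℝ (Fin d) → EuclideanSpace ℝ (Fin d)} {r p : A → ℝ}
    {μ : Measure (EuclideanSpace ℝ (Fin d))} [IsProbabilityMeasure μ]
    (h : IsStationaryMeasure φ p μ) (hr : ∀ a, IsSimilarityWith (r a) (φ a))
    (hirr : AffinelyIrreducible φ) :
    ∃ α : ℝ, 0 < α ∧ ∀ (Ψ : ℕ → ℝ) (m : ℕ), (∀ q, m ≤ q → 0 < Ψ q) →
      AntitoneOn Ψ (Set.Ici m) →
      Summable (fun n : ℕ => ((2 ^ n : ℝ) ^ dirichletExponent (Fin d) * Ψ (2 ^ n)) ^ α) →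
      μ (WApprox d Ψ) = 0 := by
  have : Nonempty (Fin d) := ⟨⟨0, hd⟩⟩
  obtain ⟨C, α, hC, hα, slab_le⟩ := h.exists_slabConcentration_le_rpow hr hirr
  obtain ⟨κ, K, hκ, hK, nearRational_le⟩ := h.exists_measure_nearRational_le hr
  refine ⟨α, hα, fun Ψ m hpos hanti hsum => ?_⟩
  set L : ℕ → ℝ := fun n => (2 ^ n : ℝ) ^ dirichletExponent (Fin d) * Ψ (2 ^ n)
  have sqrt_pos : 0 < √(d : ℝ) := by positivity
  refine measure_mono_null (fun x hx => frequently_mem_nearRational hpos hanti hx)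
    (measure_frequently_eq_zero_of_eventually_le (hsum.mul_left ((C * (K * √d)) ^ α)) ?_)
  have rpow_small : ∀ᶠ n in atTop, L n ^ α < (κ / √d) ^ α :=
    hsum.tendsto_atTop_zero.eventually_lt_const (by positivity)
  filter_upwards [rpow_small, eventually_ge_atTop m] with n hn hmn
  have Ψ_pos := hpos _ (hmn.trans Nat.lt_two_pow_self.le)
  have L_pos : 0 < L n := by positivity
  have L_le : √d * L n ≤ κ := by
    rw [← le_div_iff₀' sqrt_pos]
    exact ((Real.rpow_lt_rpow_iff L_pos.le (by positivity) hα).1 hn).le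
  have radius_eq : √d * Ψ (2 ^ n) =
      √d * L n * ((2 ^ n : ℕ) : ℝ) ^ (-dirichletExponent (Fin d)) := by
    rw [Real.rpow_neg (by positivity), Nat.cast_pow, Nat.cast_ofNat]
    simp only [L]
    field_simp
  calc μ (nearRational (2 ^ n) (√d * Ψ (2 ^ n)))
      ≤ slabConcentration μ (K * (√d * L n)) :=
        radius_eq ▸ nearRational_le _ _ (by positivity) (by positivity) L_le
    _ ≤ ENNReal.ofReal ((C * (K * (√d * L n))) ^ α) := slab_le _ (by positivity)
    _ = ENNReal.ofReal ((C * (K * √d)) ^ α * L n ^ α) := by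
        rw [← Real.mul_rpow (by positivity) L_pos.le]; congr 2; ring

end Khintchine

section LogarithmicRate

lemma rpow_mul_log_rpow_pos (s β : ℝ) {q : ℕ} (hq : 2 ≤ q) :
    0 < (q : ℝ) ^ s * Real.log q ^ β := by
  have : 0 < Real.log q := Real.log_pos (by exact_mod_cast hq)
  positivity

lemma antitoneOn_rpow_mul_log_rpow {s β : ℝ} (hs : s ≤ 0) (hβ : β ≤ 0) :
    AntitoneOn (fun q : ℕ => (q : ℝ) ^ s * Real.log q ^ β) (Set.Ici 2) := by
  intro q hq q' _ hqq'
  have hq2 : (2 : ℝ) ≤ q := by exact_mod_cast hq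
  have hle : (q : ℝ) ≤ q' := by exact_mod_cast hqq'
  have log_pos : 0 < Real.log q := Real.log_pos (by linarith)
  exact mul_le_mul (Real.rpow_le_rpow_of_nonpos (by linarith) hle hs)
    (Real.rpow_le_rpow_of_nonpos log_pos (Real.log_le_log (by linarith) hle) hβ)
    (Real.rpow_nonneg (Real.log_natCast_nonneg _) _) (by positivity)

lemma summable_log_two_pow_rpow {s α β : ℝ} (h : 1 < β * α) :
    Summable fun n : ℕ => ((2 ^ n : ℝ) ^ s *
      (((2 ^ n : ℕ) : ℝ) ^ (-s) * Real.log ((2 ^ n : ℕ) : ℝ) ^ (-β))) ^ α := by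
  have summable := (Real.summable_nat_rpow.2 (neg_lt_neg h)).mul_left (Real.log 2 ^ (-(β * α)))
  refine summable.congr fun n => ?_
  have log_nonneg : 0 ≤ Real.log 2 := (Real.log_pos one_lt_two).le
  rw [Nat.cast_pow, Nat.cast_ofNat, ← mul_assoc, ← Real.rpow_add (by positivity), add_neg_cancel,
    Real.rpow_zero, one_mul, Real.log_pow, ← Real.rpow_mul (by positivity), neg_mul,
    Real.mul_rpow (by positivity) log_nonneg, mul_comm]

end LogarithmicRate

/-- Log-refined Diophantine statement for affinely irreducible self-similar measures. -/
theorem self_similar_log_null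
    (d : ℕ) (hd : 0 < d) {A : Type*} [Fintype A]
    (φ : A → EuclideanSpace ℝ (Fin d) → EuclideanSpace ℝ (Fin d))
    (hΦ : IsSelfSimilarIFS φ) (hirr : AffinelyIrreducible φ)
    (p : A → ℝ) (hp : ∀ a, 0 < p a) (hp1 : ∑ a, p a = 1)
    (μ : Measure (EuclideanSpace ℝ (Fin d))) [IsProbabilityMeasure μ]
    (hstat : μ = ∑ a, ENNReal.ofReal (p a) • Measure.map (φ a) μ) :
    ∃ α : ℝ, 0 < α ∧ ∀ β : ℝ, α < β →
      μ {x : EuclideanSpace ℝ (Fin d) |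
          {pq : (Fin d → ℤ) × ℕ | 2 ≤ pq.2 ∧
            ∀ i, |x i - (pq.1 i : ℝ) / (pq.2 : ℝ)| ≤
              (pq.2 : ℝ) ^ (-(((d : ℝ) + 1) / d)) * Real.log pq.2 ^ (-β)}.Infinite} = 0 := by
  choose r hr using hΦ.2.1
  have hμ : IsStationaryMeasure φ p μ := ⟨hp, hp1, hstat⟩
  obtain ⟨α, hα, khintchine⟩ := hμ.exists_measure_WApprox_eq_zero hd hr hirr
  refine ⟨1 / α, by positivity, fun β hβ => ?_⟩
  have hβ0 : 0 < β := lt_trans (by positivity) hβ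
  have hs : dirichletExponent (Fin d) = ((d : ℝ) + 1) / d := by simp [dirichletExponent]
  have null : μ (WApprox d fun q => (q : ℝ) ^ (-(((d : ℝ) + 1) / d)) * Real.log q ^ (-β)) = 0 := by
    refine khintchine _ 2 (fun q hq => rpow_mul_log_rpow_pos _ _ hq)
      (antitoneOn_rpow_mul_log_rpow (neg_nonpos.2 (by positivity)) (neg_nonpos.2 hβ0.le)) ?_
    rw [hs]
    exact summable_log_two_pow_rpow ((div_lt_iff₀ hα).1 hβ)
  refine measure_mono_null (fun x hx => Set.Infinite.mono ?_ hx) null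
  exact fun pq hpq => ⟨two_pos.trans_le hpq.1, hpq.2⟩
end
end

section
/- Let {φ_a}_{a∈A} be a finite family of contractions of ℝ^d (#A ≥ 2), let (p_a)_{a∈A} be a probability vector with p_a > 0 and ∑_a p_a = 1, and let μ be the associated stationary measure, i.e. the unique Borel probability measure with μ = ∑_{a∈A} p_a (φ_a)_*μ. Let A_1, …, A_k be nonempty subsets of A with A_1 ∪ ⋯ ∪ A_k = A, set I = {1,…,k} and Ω = I^ℕ, and for a ∈ A write n(a) = #{j ∈ I : a ∈ A_j}. Define a probability vector (q_i)_{i∈I} by q_i = ∑_{a∈A_i} p_a / n(a), and for each i ∈ I a probability measure ν_i on A by ν_i({a}) = p_a/(q_i · n(a)) for a ∈ A_i and ν_i({a}) = 0 for a ∉ A_i. Let ℙ be the infinite product measure on Ω = I^ℕ with each factor (q_i)_{i∈I}, and for ω = (i_n)_{n≥1} ∈ Ω let m_ω be the infinite product measure on A^ℕ whose n-th factor is ν_{i_n}. Let Π : A^ℕ → ℝ^d be the coding map. Then for every Borel set E ⊆ ℝ^d, μ(E) = ∫_Ω m_ω(Π^{−1}(E)) dℙ(ω). -/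
noncomputable section
open MeasureTheory Metric Filter Topology

variable {E : Type*} [NormedAddCommGroup E] [NormedSpace ℝ E]

/-!
Averaging an infinite product of probability measures over independent random parameters gives
the infinite product of the averaged factors. Since `∑ i, q i • ν i` is the law `p` on `A`, the
average of `m ω` over `ω` is therefore the Bernoulli measure with marginal `p`. Stationarity says
that choosing a letter with law `p` and applying its map to an independent `μ`-distributed point
preserves `μ`; by induction so does applying the first `n` maps of a Bernoulli word. These random
points converge to the image of the word under the coding map, which hence also has law `μ`.
-/

open Function
open scoped ENNReal

section InfiniteProduct

open ProbabilityTheory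

variable {ι : Type*} {X Y : ι → Type*} [∀ i, MeasurableSpace (X i)] [∀ i, MeasurableSpace (Y i)]

lemma lintegral_finsetProd_infinitePi (ρ : ∀ i, Measure (X i)) [∀ i, IsProbabilityMeasure (ρ i)]
    {f : ∀ i, X i → ℝ≥0∞} (hf : ∀ i, Measurable (f i)) (s : Finset ι) :
    ∫⁻ x, ∏ i ∈ s, f i (x i) ∂Measure.infinitePi ρ = ∏ i ∈ s, ∫⁻ y, f i y ∂ρ i := by
  refine (lintegral_prod_eq_prod_lintegral_of_indepFun s (fun i (x : ∀ i, X i) ↦ f i (x i))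
    (iIndepFun_infinitePi hf) fun i ↦ (hf i).comp (measurable_pi_apply i)).trans ?_
  exact Finset.prod_congr rfl fun i _ ↦
    (measurePreserving_eval_infinitePi ρ i).lintegral_comp (hf i)

variable {κ : ∀ i, X i → Measure (Y i)} [∀ i x, IsProbabilityMeasure (κ i x)]

lemma measurable_infinitePi (hκ : ∀ i, Measurable (κ i)) :
    Measurable fun x : ∀ i, X i ↦ Measure.infinitePi fun i ↦ κ i (x i) := by
  refine .measure_of_isPiSystem_of_isProbabilityMeasure generateFrom_squareCylinders.symm
    (isPiSystem_squareCylinders (fun _ ↦ MeasurableSpace.isPiSystem_measurableSet)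
      fun _ ↦ MeasurableSet.univ) ?_
  rintro _ ⟨s, t, ht, rfl⟩
  have ht' : ∀ i, MeasurableSet (t i) := fun i ↦ ht i (Set.mem_univ i)
  simp only [Measure.infinitePi_pi _ fun i _ ↦ ht' i]
  exact Finset.measurable_prod s fun i _ ↦
    ((Measure.measurable_coe (ht' i)).comp (hκ i)).comp (measurable_pi_apply i)

lemma bind_infinitePi (ρ : ∀ i, Measure (X i)) [∀ i, IsProbabilityMeasure (ρ i)]
    (hκ : ∀ i, Measurable (κ i)) :
    (Measure.infinitePi ρ).bind (fun x ↦ Measure.infinitePi fun i ↦ κ i (x i)) =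
      Measure.infinitePi fun i ↦ (ρ i).bind (κ i) := by
  have (i : ι) : IsProbabilityMeasure ((ρ i).bind (κ i)) :=
    isProbabilityMeasure_bind (hκ i).aemeasurable (ae_of_all _ inferInstance)
  refine Measure.eq_infinitePi _ fun s t ht ↦ ?_
  calc (Measure.infinitePi ρ).bind (fun x ↦ Measure.infinitePi fun i ↦ κ i (x i)) (Set.pi s t)
      = ∫⁻ x, ∏ i ∈ s, κ i (x i) (t i) ∂Measure.infinitePi ρ := by
        rw [Measure.bind_apply (.pi s.countable_toSet fun i _ ↦ ht i)
          (measurable_infinitePi hκ).aemeasurable]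
        simp only [Measure.infinitePi_pi _ fun i _ ↦ ht i]
    _ = ∏ i ∈ s, ∫⁻ y, κ i y (t i) ∂ρ i :=
        lintegral_finsetProd_infinitePi ρ (fun i ↦ (Measure.measurable_coe (ht i)).comp (hκ i)) s
    _ = ∏ i ∈ s, (ρ i).bind (κ i) (t i) := by
        simp only [Measure.bind_apply (ht _) (hκ _).aemeasurable]

end InfiniteProduct

section SequenceSpace

open ProbabilityTheory

variable {X : ℕ → Type*} [∀ n, MeasurableSpace (X n)]

lemma measurePreserving_head_tail_infinitePi (μ : ∀ n, Measure (X n))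
    [∀ n, IsProbabilityMeasure (μ n)] :
    MeasurePreserving (fun x : ∀ n, X n ↦ (x 0, fun n ↦ x (n + 1))) (Measure.infinitePi μ)
      ((μ 0).prod (Measure.infinitePi fun n ↦ μ (n + 1))) := by
  have hcoord : iIndepFun (fun n (x : ∀ n, X n) ↦ x n) (Measure.infinitePi μ) :=
    iIndepFun_infinitePi (X := fun _ ↦ id) fun _ ↦ measurable_id
  have hindep : IndepFun (fun x : ∀ n, X n ↦ x 0) (fun x n ↦ x (n + 1)) (Measure.infinitePi μ) := by
    refine IndepFun.indepFun_process (by fun_prop) (by fun_prop) fun s ↦ ?_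
    have hdisj : Disjoint {0} (s.image Nat.succ) := by simp
    refine (hcoord.indepFun_finset _ _ hdisj (by fun_prop)).comp
      (φ := fun y ↦ y ⟨0, Finset.mem_singleton_self 0⟩)
      (ψ := fun y (n : s) ↦ y ⟨n + 1, Finset.mem_image_of_mem _ n.2⟩) ?_ ?_
    · exact measurable_pi_apply _
    · fun_prop
  refine ⟨by fun_prop, ?_⟩
  rw [hindep.map_prod_eq_prod_map_map (Measurable.aemeasurable (by fun_prop))
      (Measurable.aemeasurable (by fun_prop)), Measure.infinitePi_map_eval,
    Measure.map_infinitePi_infinitePi_of_inj (add_left_injective 1)]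

lemma eq_infinitePi_of_initialCylinder [∀ n, Countable (X n)] [∀ n, MeasurableSingletonClass (X n)]
    {μ : ∀ n, Measure (X n)} [∀ n, IsProbabilityMeasure (μ n)] {M : Measure (∀ n, X n)}
    (hM : ∀ (N : ℕ) (w : ∀ j : Fin N, X j),
      M {x | ∀ j : Fin N, x j = w j} = ∏ j : Fin N, μ j {w j}) :
    M = Measure.infinitePi μ := by
  refine IsProjectiveLimit.unique ?_ (Measure.isProjectiveLimit_infinitePi μ)
  refine (isProjectiveLimit_nat_iff (isProjectiveMeasureFamily_pi μ) M).2 fun n ↦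
    Measure.ext_of_singleton fun w ↦ ?_
  let e : Fin (n + 1) ≃ Finset.Iic n :=
    { toFun := fun j ↦ ⟨j, Finset.mem_Iic.2 j.is_le⟩
      invFun := fun j ↦ ⟨j, Nat.lt_succ_of_le (Finset.mem_Iic.1 j.2)⟩
      left_inv := fun _ ↦ rfl
      right_inv := fun _ ↦ rfl }
  have hpre : Preorder.frestrictLe n ⁻¹' {w} = {x | ∀ j : Fin (n + 1), x j = w (e j)} := by
    ext x
    exact funext_iff.trans e.forall_congr_right.symm
  rw [Measure.map_apply (by fun_prop) (measurableSet_singleton w), hpre, Measure.pi_singleton,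
    ← e.prod_comp]
  exact hM (n + 1) fun j ↦ w (e j)

end SequenceSpace

lemma measurePreserving_of_tendsto {Ω X : Type*} [MeasurableSpace Ω] [TopologicalSpace X]
    [TopologicalSpace.PseudoMetrizableSpace X] [MeasurableSpace X] [BorelSpace X]
    {P : Measure Ω} [IsFiniteMeasure P] {μ : Measure X} {f : ℕ → Ω → X} {g : Ω → X}
    (hf : ∀ n, MeasurePreserving (f n) P μ)
    (hfg : ∀ ω, Tendsto (fun n ↦ f n ω) atTop (𝓝 (g ω))) :
    MeasurePreserving g P μ := by
  have hg : Measurable g :=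
    measurable_of_tendsto_metrizable (fun n ↦ (hf n).measurable) (tendsto_pi_nhds.2 hfg)
  refine ⟨hg, ext_of_forall_lintegral_eq_of_IsFiniteMeasure fun u ↦ ?_⟩
  have hu : Measurable fun x ↦ (u x : ℝ≥0∞) := u.continuous.measurable.coe_nnreal_ennreal
  have hlim : Tendsto (fun n ↦ ∫⁻ ω, u (f n ω) ∂P) atTop (𝓝 (∫⁻ ω, u (g ω) ∂P)) :=
    tendsto_lintegral_of_dominated_convergence (fun _ ↦ (nndist u 0 : ℝ≥0∞))
      (fun n ↦ hu.comp (hf n).measurable)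
      (fun n ↦ ae_of_all _ fun ω ↦
        ENNReal.coe_le_coe.2 (BoundedContinuousFunction.NNReal.upper_bound u _))
      (by simpa using ENNReal.mul_ne_top (by simp) (by simp))
      (ae_of_all _ fun ω ↦ ENNReal.tendsto_coe.2 ((u.continuous.tendsto _).comp (hfg ω)))
  simp only [fun n ↦ (hf n).lintegral_comp hu] at hlim
  rw [lintegral_map hu hg]
  exact tendsto_nhds_unique hlim tendsto_const_nhds

section Coding

variable {A X : Type*} [MeasurableSpace A] [MeasurableSpace X] {φ : A → X → X}

lemma measurePreserving_wordMap {π : Measure A} [IsProbabilityMeasure π] {μ : Measure X}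
    [SFinite μ] (hφ : MeasurePreserving (uncurry φ) (π.prod μ) μ) (n : ℕ) :
    MeasurePreserving (fun z : (ℕ → A) × X ↦ wordMap φ n z.1 z.2)
      ((Measure.infinitePi fun _ ↦ π).prod μ) μ := by
  induction n with
  | zero => exact measurePreserving_snd
  | succ n ih =>
    exact hφ.comp <| ((MeasurePreserving.id π).prod ih).comp <|
      (measurePreserving_prodAssoc π (Measure.infinitePi fun _ : ℕ ↦ π) μ).comp <|
        (measurePreserving_head_tail_infinitePi fun _ ↦ π).prod (.id μ)

variable [TopologicalSpace X] [TopologicalSpace.PseudoMetrizableSpace X] [BorelSpace X]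
  {codingMap : (ℕ → A) → X}

lemma measurePreserving_codingMap {π : Measure A} [IsProbabilityMeasure π] {μ : Measure X}
    [IsProbabilityMeasure μ] (hφ : MeasurePreserving (uncurry φ) (π.prod μ) μ)
    (hcodingMap : ∀ a x₀, Tendsto (fun n ↦ wordMap φ n a x₀) atTop (𝓝 (codingMap a))) :
    MeasurePreserving codingMap (Measure.infinitePi fun _ ↦ π) μ := by
  have hfst : MeasurePreserving (fun z : (ℕ → A) × X ↦ codingMap z.1)
      ((Measure.infinitePi fun _ ↦ π).prod μ) μ :=
    measurePreserving_of_tendsto (measurePreserving_wordMap hφ) fun z ↦ hcodingMap z.1 z.2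
  obtain ⟨x₀⟩ : Nonempty X := nonempty_of_isProbabilityMeasure μ
  have hmeas : Measurable codingMap := hfst.measurable.comp (measurable_prodMk_right (y := x₀))
  have hproj : MeasurePreserving Prod.fst ((Measure.infinitePi fun _ : ℕ ↦ π).prod μ)
      (Measure.infinitePi fun _ ↦ π) := measurePreserving_fst
  refine ⟨hmeas, ?_⟩
  rw [← hproj.map_eq, Measure.map_map hmeas measurable_fst]
  exact hfst.map_eq

lemma stationary_apply_eq_lintegral_infinitePi {I : Type*} [MeasurableSpace I] {ρ : Measure I}
    [IsProbabilityMeasure ρ] {κ : I → Measure A} [∀ i, IsProbabilityMeasure (κ i)]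
    (hκ : Measurable κ) {μ : Measure X} [IsProbabilityMeasure μ]
    (hφ : MeasurePreserving (uncurry φ) ((ρ.bind κ).prod μ) μ)
    (hcodingMap : ∀ a x₀, Tendsto (fun n ↦ wordMap φ n a x₀) atTop (𝓝 (codingMap a)))
    {S : Set X} (hS : MeasurableSet S) :
    μ S = ∫⁻ ω, Measure.infinitePi (fun n ↦ κ (ω n)) (codingMap ⁻¹' S)
      ∂Measure.infinitePi fun _ : ℕ ↦ ρ := by
  have : IsProbabilityMeasure (ρ.bind κ) :=
    isProbabilityMeasure_bind hκ.aemeasurable (ae_of_all _ inferInstance)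
  have hpres := measurePreserving_codingMap hφ hcodingMap
  rw [← hpres.measure_preimage hS.nullMeasurableSet, ← bind_infinitePi _ fun _ ↦ hκ,
    Measure.bind_apply (hpres.measurable hS) (measurable_infinitePi fun _ ↦ hκ).aemeasurable]

end Coding

lemma map_uncurry_prod_eq_sum {A X Z : Type*} [Countable A] [MeasurableSpace A]
    [MeasurableSingletonClass A] [MeasurableSpace X] [MeasurableSpace Z] {φ : A → X → Z}
    (hφ : ∀ a, Measurable (φ a)) (π : Measure A) (μ : Measure X) [SFinite μ] :
    (π.prod μ).map (uncurry φ) = Measure.sum fun a ↦ π {a} • μ.map (φ a) := by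
  have huncurry : Measurable (uncurry φ) := measurable_from_prod_countable_right hφ
  ext S hS
  rw [Measure.map_apply huncurry hS, Measure.prod_apply (huncurry hS), lintegral_countable',
    Measure.sum_apply _ hS]
  refine tsum_congr fun a ↦ ?_
  rw [Measure.smul_apply, smul_eq_mul, Measure.map_apply (hφ a) hS, mul_comm]
  rfl

theorem stationary_disintegration_general {A I X : Type*}
    [Countable A] [MeasurableSpace A] [MeasurableSingletonClass A]
    [Countable I] [MeasurableSpace I] [MeasurableSingletonClass I]
    [TopologicalSpace X] [TopologicalSpace.PseudoMetrizableSpace X] [MeasurableSpace X]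
    [BorelSpace X] {φ : A → X → X} (hφ : ∀ a, Measurable (φ a))
    {p : A → ℝ≥0∞} {μ : Measure X} [IsProbabilityMeasure μ]
    (hstat : μ = Measure.sum fun a ↦ p a • μ.map (φ a))
    {q : I → ℝ≥0∞} {ν : I → Measure A} [∀ i, IsProbabilityMeasure (ν i)]
    (hmix : ∀ a, ∑' i, q i * ν i {a} = p a)
    {ℙ : Measure (ℕ → I)}
    (hℙ : ∀ (N : ℕ) (v : Fin N → I), ℙ {ω | ∀ j : Fin N, ω j = v j} = ∏ j, q (v j))
    {m : (ℕ → I) → Measure (ℕ → A)}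
    (hm : ∀ (ω : ℕ → I) (N : ℕ) (w : Fin N → A),
      m ω {a | ∀ j : Fin N, a j = w j} = ∏ j : Fin N, ν (ω j) {w j})
    {codingMap : (ℕ → A) → X}
    (hcodingMap : ∀ a x₀, Tendsto (fun n ↦ wordMap φ n a x₀) atTop (𝓝 (codingMap a)))
    (S : Set X) (hS : MeasurableSet S) :
    μ S = ∫⁻ ω, m ω (codingMap ⁻¹' S) ∂ℙ := by
  have : IsProbabilityMeasure ℙ := ⟨by simpa using hℙ 0 Fin.elim0⟩
  let ρ : Measure I := ℙ.map fun ω ↦ ω 0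
  have : IsProbabilityMeasure ρ :=
    Measure.isProbabilityMeasure_map (measurable_pi_apply 0).aemeasurable
  have hρ (i : I) : ρ {i} = q i := by
    rw [Measure.map_apply (measurable_pi_apply 0) (measurableSet_singleton i)]
    simpa [Set.preimage] using hℙ 1 fun _ ↦ i
  have hν : Measurable ν := measurable_of_countable ν
  have hmixture (a : A) : ρ.bind ν {a} = p a := by
    rw [Measure.bind_apply (measurableSet_singleton a) hν.aemeasurable, lintegral_countable']
    simp only [hρ, mul_comm, ← hmix]
  have hpres : MeasurePreserving (uncurry φ) ((ρ.bind ν).prod μ) μ := by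
    refine ⟨measurable_from_prod_countable_right hφ, ?_⟩
    rw [map_uncurry_prod_eq_sum hφ]
    simp only [hmixture, ← hstat]
  have hℙ_eq : ℙ = Measure.infinitePi fun _ ↦ ρ :=
    eq_infinitePi_of_initialCylinder (by simpa only [hρ] using hℙ)
  have hm_eq (ω : ℕ → I) : m ω = Measure.infinitePi fun n ↦ ν (ω n) :=
    eq_infinitePi_of_initialCylinder (hm ω)
  simp only [hm_eq]
  rw [hℙ_eq]
  exact stationary_apply_eq_lintegral_infinitePi hν hpres hcodingMap hS

lemma IsContractionWith.continuous {V : Type*} [NormedAddCommGroup V] {r : ℝ} {f : V → V}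
    (hf : IsContractionWith r f) : Continuous f :=
  (LipschitzWith.of_dist_le_mul (K := r.toNNReal) fun x y ↦ by
    simpa only [dist_eq_norm, Real.coe_toNNReal r hf.1.le] using hf.2.2 x y).continuous

lemma sum_ofReal_mul_ofReal_div_card {I : Type*} {s : Finset I} (hs : s.Nonempty) {q : I → ℝ}
    (hq : ∀ i ∈ s, 0 < q i) (x : ℝ) :
    ∑ i ∈ s, ENNReal.ofReal (q i) * ENNReal.ofReal (x / (q i * s.card)) = ENNReal.ofReal x := by
  have hcard : (0 : ℝ) < s.card := by exact_mod_cast hs.card_pos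
  calc ∑ i ∈ s, ENNReal.ofReal (q i) * ENNReal.ofReal (x / (q i * s.card))
      = ∑ _i ∈ s, ENNReal.ofReal (x / s.card) := by
        refine Finset.sum_congr rfl fun i hi ↦ ?_
        rw [← ENNReal.ofReal_mul (hq i hi).le, ← div_div, ← mul_div_assoc,
          mul_div_cancel₀ x (hq i hi).ne']
    _ = ENNReal.ofReal x := by
        rw [Finset.sum_const, nsmul_eq_mul, ← ENNReal.ofReal_natCast,
          ← ENNReal.ofReal_mul hcard.le, mul_div_cancel₀ x hcard.ne']

lemma sum_ofReal_mul_ite_mem_eq {A I : Type*} [DecidableEq A] [Fintype I] {𝒜 : I → Finset A}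
    {p : A → ℝ} (hp : ∀ a, 0 < p a) {q : I → ℝ}
    (hq : ∀ i, q i = ∑ a ∈ 𝒜 i, p a / ((Finset.univ.filter fun j ↦ a ∈ 𝒜 j).card : ℝ))
    {a : A} (ha : ∃ i, a ∈ 𝒜 i) :
    ∑ i, ENNReal.ofReal (q i) * (if a ∈ 𝒜 i then
      ENNReal.ofReal (p a / (q i * ((Finset.univ.filter fun j ↦ a ∈ 𝒜 j).card : ℝ))) else 0) =
      ENNReal.ofReal (p a) := by
  have hq_pos (i : I) (hi : (𝒜 i).Nonempty) : 0 < q i := by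
    rw [hq]
    refine Finset.sum_pos (fun b hb ↦ div_pos (hp b) (Nat.cast_pos.2 (Finset.card_pos.2 ?_))) hi
    exact ⟨i, by simpa using hb⟩
  simp only [mul_ite, mul_zero, ← Finset.sum_filter]
  refine sum_ofReal_mul_ofReal_div_card ?_ (fun i hi ↦ hq_pos i ⟨a, ?_⟩) (p a)
  · simpa [Finset.filter_nonempty_iff] using ha
  · simpa using hi

/-- Proposition (disintegration of stationary measures). Infinite product measures
are characterized by their values on cylinder sets. -/
theorem stationary_disintegration
    (d : ℕ) {A : Type*} [Fintype A] [DecidableEq A] [MeasurableSpace A] [MeasurableSingletonClass A]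
    (φ : A → EuclideanSpace ℝ (Fin d) → EuclideanSpace ℝ (Fin d))
    (hφ : ∀ a, ∃ r, IsContractionWith r (φ a))
    (hA : 2 ≤ Fintype.card A)
    (p : A → ℝ) (hp : ∀ a, 0 < p a) (hp1 : ∑ a, p a = 1)
    (μ : Measure (EuclideanSpace ℝ (Fin d))) [IsProbabilityMeasure μ]
    (hstat : μ = ∑ a, ENNReal.ofReal (p a) • Measure.map (φ a) μ)
    (k : ℕ) (hk : 0 < k)
    (𝒜 : Fin k → Finset A) (h𝒜ne : ∀ i, (𝒜 i).Nonempty) (h𝒜cov : ∀ a, ∃ i, a ∈ 𝒜 i)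
    (q : Fin k → ℝ)
    (hq : ∀ i, q i = ∑ a ∈ 𝒜 i,
      p a / ((Finset.univ.filter fun j : Fin k => a ∈ 𝒜 j).card : ℝ))
    (ν : Fin k → Measure A) [∀ i, IsProbabilityMeasure (ν i)]
    (hν : ∀ i a, ν i {a} = if a ∈ 𝒜 i then
      ENNReal.ofReal (p a / (q i * ((Finset.univ.filter fun j : Fin k => a ∈ 𝒜 j).card : ℝ)))
      else 0)
    -- ℙ is the infinite product measure on Ω = I^ℕ with each factor (q_i)_{i∈I},
    -- characterized by its values on cylinder sets:
    (ℙ : Measure (ℕ → Fin k)) [IsProbabilityMeasure ℙ]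
    (hℙ : ∀ (N : ℕ) (v : Fin N → Fin k),
      ℙ {ω | ∀ j : Fin N, ω j = v j} = ∏ j, ENNReal.ofReal (q (v j)))
    -- m ω is the infinite product measure on A^ℕ whose n-th factor is ν (ω n):
    (m : (ℕ → Fin k) → Measure (ℕ → A)) (hmprob : ∀ ω, IsProbabilityMeasure (m ω))
    (hm : ∀ (ω : ℕ → Fin k) (N : ℕ) (w : Fin N → A),
      m ω {a | ∀ j : Fin N, a j = w j} = ∏ j : Fin N, ν (ω j) {w j})
    -- the coding map:
    (codingMap : (ℕ → A) → EuclideanSpace ℝ (Fin d))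
    (hcodingMap : ∀ (a : ℕ → A) (x₀ : EuclideanSpace ℝ (Fin d)),
      Filter.Tendsto (fun n => wordMap φ n a x₀) Filter.atTop (nhds (codingMap a))) :
    ∀ S : Set (EuclideanSpace ℝ (Fin d)), MeasurableSet S →
      μ S = ∫⁻ ω, m ω (codingMap ⁻¹' S) ∂ℙ := by
  refine stationary_disintegration_general (q := fun i ↦ ENNReal.ofReal (q i))
    (fun a ↦ (hφ a).choose_spec.continuous.measurable) (by rwa [Measure.sum_fintype])
    (fun a ↦ ?_) hℙ hm hcodingMap
  simp only [tsum_fintype, hν]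
  exact sum_ofReal_mul_ite_mem_eq hp hq (h𝒜cov a)
end
end
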